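/- Extension Lemma (counting extensions): Let n ≥ 1 and let φ be an order automorphism of D_n satisfying φ(H_{n+1}) = H_{n+1} (with φ acting by φ(S, k) = ({φ(H) : H ∈ S}, k) element-wise). Then the number of order automorphisms ψ of D_{n+1} whose restriction to D_n equals φ is exactly ∏_{(S,k) ∈ H_{n+1}} k!. -/

import Mathlib

/-- A finite digraph: a finite nonempty vertex set `Fin n` with a (Bool-valued)
edge relation, loops allowed. -/
structure FinDigraph where
  n : ℕ
  pos : 0 < n
  adj : Fin n → Fin n → Bool

namespace FinDigraph

/-- Isomorphism of finite digraphs. -/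
def Iso (G H : FinDigraph) : Prop :=
  ∃ e : Fin G.n ≃ Fin H.n, ∀ u v, H.adj (e u) (e v) = G.adj u v

theorem iso_refl (G : FinDigraph) : Iso G G := ⟨Equiv.refl _, fun _ _ => rfl⟩

theorem iso_symm {G H : FinDigraph} (h : Iso G H) : Iso H G := by
  obtain ⟨e, he⟩ := h
  refine ⟨e.symm, fun u v => ?_⟩
  rw [← he (e.symm u) (e.symm v), e.apply_symm_apply, e.apply_symm_apply]

theorem iso_trans {G H K : FinDigraph} (hGH : Iso G H) (hHK : Iso H K) : Iso G K := by
  obtain ⟨e, he⟩ := hGH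
  obtain ⟨f, hf⟩ := hHK
  exact ⟨e.trans f, fun u v => (hf (e u) (e v)).trans (he u v)⟩

instance isoSetoid : Setoid FinDigraph :=
  ⟨Iso, iso_refl, fun h => iso_symm h, fun h h' => iso_trans h h'⟩

/-- `Emb G H` : `G` is isomorphic to an induced subdigraph of `H`. -/
def Emb (G H : FinDigraph) : Prop :=
  ∃ f : Fin G.n ↪ Fin H.n, ∀ u v, H.adj (f u) (f v) = G.adj u v

end FinDigraph

/-- `D`: the isomorphism classes of finite digraphs. -/
def D : Type := Quotient FinDigraph.isoSetoid

/-- The isomorphism class of a finite digraph. -/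
def toD (G : FinDigraph) : D := Quotient.mk _ G

/-- The substructure (induced subdigraph) ordering `⊑` on `D`. -/
instance : LE D :=
  ⟨fun x y => ∃ G H : FinDigraph, x = toD G ∧ y = toD H ∧ FinDigraph.Emb G H⟩

/-- An order automorphism: a bijection such that `x ≤ y ↔ f x ≤ f y`. -/
def IsOrderAuto {α : Type*} [LE α] (f : α → α) : Prop :=
  Function.Bijective f ∧ ∀ x y : α, x ≤ y ↔ f x ≤ f y

/-- φ₁ on digraphs: complement the loop status of every vertex. -/
def phi1Fn (G : FinDigraph) : FinDigraph :=
  ⟨G.n, G.pos, fun u v => if u = v then !(G.adj u v) else G.adj u v⟩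

/-- Edge reversal: transpose the edge relation. -/
def revFn (G : FinDigraph) : FinDigraph :=
  ⟨G.n, G.pos, fun u v => G.adj v u⟩

/-- φ₂ on digraphs: toggle both edges between distinct loopless vertices joined
by both or neither of the two possible edges. -/
def phi2Fn (G : FinDigraph) : FinDigraph :=
  ⟨G.n, G.pos, fun u v =>
    if u ≠ v ∧ G.adj u u = false ∧ G.adj v v = false ∧ G.adj u v = G.adj v u then
      !(G.adj u v)
    else G.adj u v⟩

/-- φ₃ on digraphs: toggle both edges between distinct looped vertices joined
by both or neither of the two possible edges. -/
def phi3Fn (G : FinDigraph) : FinDigraph :=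
  ⟨G.n, G.pos, fun u v =>
    if u ≠ v ∧ G.adj u u = true ∧ G.adj v v = true ∧ G.adj u v = G.adj v u then
      !(G.adj u v)
    else G.adj u v⟩

/-- φ₄ on digraphs: reverse the single edge between distinct loopless vertices
joined by exactly one of the two possible edges. -/
def phi4Fn (G : FinDigraph) : FinDigraph :=
  ⟨G.n, G.pos, fun u v =>
    if u ≠ v ∧ G.adj u u = false ∧ G.adj v v = false ∧ G.adj u v ≠ G.adj v u then
      G.adj v u
    else G.adj u v⟩

/-- φ₅ on digraphs: reverse the single edge between distinct looped vertices
joined by exactly one of the two possible edges. -/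
def phi5Fn (G : FinDigraph) : FinDigraph :=
  ⟨G.n, G.pos, fun u v =>
    if u ≠ v ∧ G.adj u u = true ∧ G.adj v v = true ∧ G.adj u v ≠ G.adj v u then
      G.adj v u
    else G.adj u v⟩

/-- φ_π on digraphs: for each ordered pair `(u,v)` of distinct vertices with a loop at
`u` and no loop at `v`, replace its type `(Adj(u,v), Adj(v,u)) : Bool × Bool` by `π`
applied to it; everything else is unchanged. -/
def phiPiFn (π : Equiv.Perm (Bool × Bool)) (G : FinDigraph) : FinDigraph :=
  ⟨G.n, G.pos, fun u v =>
    if u = v then G.adj u v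
    else if G.adj u u = true ∧ G.adj v v = false then (π (G.adj u v, G.adj v u)).1
    else if G.adj u u = false ∧ G.adj v v = true then (π (G.adj v u, G.adj u v)).2
    else G.adj u v⟩

/-- The number of vertices of an isomorphism class. -/
def nVerts : D → ℕ :=
  Quotient.lift (fun G : FinDigraph => G.n) (fun _ _ h => by
    obtain ⟨e, -⟩ := h
    simpa using Fintype.card_congr e)

/-- `Dn n`: the classes of digraphs with at most `n` vertices (first `n` levels). -/
def Dn (n : ℕ) : Set D := {x : D | nVerts x ≤ n}

theorem mem_Dn_succ {n : ℕ} {x : D} (h : x ∈ Dn n) : x ∈ Dn (n + 1) :=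
  le_trans h (Nat.le_succ n)

/-- The set of lower covers of `x` in `(D, ⊑)`. -/
def lcov (x : D) : Set D :=
  {y : D | y ≤ x ∧ y ≠ x ∧ ∀ z : D, y ≤ z → z ≤ x → z = y ∨ z = x}

/-- `scount x` = number of classes sharing the lower-cover set of `x`. -/
noncomputable def scount (x : D) : ℕ := Nat.card {y : D // lcov y = lcov x}

/-- `Hset m` = `{(l(G), s(G)) : G ∈ D with exactly m vertices}`. -/
def Hset (m : ℕ) : Set (Set D × ℕ) :=
  {p : Set D × ℕ | ∃ x : D, nVerts x = m ∧ p = (lcov x, scount x)}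

/-- Element-wise action of a map of `Dn n` on a subset of `Dn n`. -/
def setImage {n : ℕ} (φ : ↥(Dn n) → ↥(Dn n)) (S : Set D) : Set D :=
  {z : D | ∃ (y : D) (h : y ∈ Dn n), y ∈ S ∧ z = ↑(φ ⟨y, h⟩)}

/-- Element-wise action of a map of `Dn n` on a set of pairs `(S, k)`. -/
def HsetImage {n : ℕ} (φ : ↥(Dn n) → ↥(Dn n)) (A : Set (Set D × ℕ)) : Set (Set D × ℕ) :=
  {p : Set D × ℕ | ∃ q ∈ A, p = (setImage φ q.1, q.2)}

/-- The swap permutation `σ(a,b) = (b,a)` of `Bool × Bool`. -/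
def sigmaSwap : Equiv.Perm (Bool × Bool) := Equiv.prodComm Bool Bool

/-- Restrictions to `D₃` of order automorphisms of `(D, ⊑)`. -/
def Aut3D : Set (↥(Dn 3) → ↥(Dn 3)) :=
  {g | ∃ φ : D → D, IsOrderAuto φ ∧ ∀ x : ↥(Dn 3), (↑(g x) : D) = φ ↑x}

/-- Restrictions to `D₃` of order automorphisms of `D₄`. -/
def Aut3D4 : Set (↥(Dn 3) → ↥(Dn 3)) :=
  {g | ∃ ψ : ↥(Dn 4) → ↥(Dn 4), IsOrderAuto ψ ∧
    ∀ x : ↥(Dn 3), (↑(g x) : D) = ↑(ψ ⟨↑x, mem_Dn_succ x.2⟩)}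

/-- Restrictions to `D₃` of order automorphisms of `D₄`, as order isomorphisms of `D₃`. -/
def Aut3D4Iso : Set (↥(Dn 3) ≃o ↥(Dn 3)) :=
  {g | ∃ ψ : ↥(Dn 4) → ↥(Dn 4), IsOrderAuto ψ ∧
    ∀ x : ↥(Dn 3), ((g x : ↥(Dn 3)) : D) = ↑(ψ ⟨↑x, mem_Dn_succ x.2⟩)}

namespace ExtLem

theorem le_mk {G H : FinDigraph} : toD G ≤ toD H ↔ FinDigraph.Emb G H := by
  constructor
  · rintro ⟨G', H', h1, h2, f, hf⟩
    obtain ⟨e1, he1⟩ : FinDigraph.Iso G G' := Quotient.exact h1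
    obtain ⟨e2, he2⟩ : FinDigraph.Iso H' H := Quotient.exact h2.symm
    refine ⟨(e1.toEmbedding.trans f).trans e2.toEmbedding, fun u v => ?_⟩
    simp only [Function.Embedding.trans_apply, Equiv.coe_toEmbedding]
    rw [he2, hf, he1]
  · intro h
    exact ⟨G, H, rfl, rfl, h⟩

theorem ind {P : D → Prop} (h : ∀ G, P (toD G)) (x : D) : P x := Quotient.ind h x

theorem D_refl (x : D) : x ≤ x := by
  induction x using ind with
  | h G => exact le_mk.2 ⟨Function.Embedding.refl _, fun _ _ => rfl⟩

theorem D_trans {x y z : D} (h : x ≤ y) (h' : y ≤ z) : x ≤ z := by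
  induction x using ind with
  | h G =>
  induction y using ind with
  | h H =>
  induction z using ind with
  | h K =>
  obtain ⟨f, hf⟩ := le_mk.1 h
  obtain ⟨g, hg⟩ := le_mk.1 h'
  refine le_mk.2 ⟨f.trans g, fun u v => ?_⟩
  simp only [Function.Embedding.trans_apply]
  rw [hg, hf]

theorem nV_le {x y : D} (h : x ≤ y) : nVerts x ≤ nVerts y := by
  induction x using ind with
  | h G =>
  induction y using ind with
  | h H =>
  obtain ⟨f, hf⟩ := le_mk.1 h
  have := Fintype.card_le_of_embedding f
  simpa [nVerts, toD] using this

theorem eq_of_le {x y : D} (h : x ≤ y) (hn : nVerts y ≤ nVerts x) : x = y := by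
  induction x using ind with
  | h G =>
  induction y using ind with
  | h H =>
  obtain ⟨f, hf⟩ := le_mk.1 h
  have h1 := nV_le h
  have h2 : G.n = H.n := le_antisymm h1 hn
  have hb : Function.Bijective f :=
    (Fintype.bijective_iff_injective_and_card f).2 ⟨f.injective, by simpa using h2⟩
  exact Quotient.sound ⟨Equiv.ofBijective f hb, fun u v => hf u v⟩

theorem interp {x y : D} (h : x ≤ y) (hlt : nVerts x < nVerts y) :
    ∃ z, x ≤ z ∧ z ≤ y ∧ nVerts z + 1 = nVerts y := by
  induction x using ind with
  | h G =>
  induction y using ind with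
  | h H =>
  obtain ⟨f, hf⟩ := le_mk.1 h
  have hlt' : G.n < H.n := hlt
  have hGp := G.pos
  obtain ⟨w, hw⟩ : ∃ w, ∀ u, f u ≠ w := by
    by_contra hc
    push Not at hc
    have := Fintype.card_le_of_surjective f hc
    simp at this
    omega
  have hc : Fintype.card {v : Fin H.n // v ≠ w} = H.n - 1 := by
    simp [Fintype.card_subtype_compl]
  let e : Fin (H.n - 1) ≃ {v : Fin H.n // v ≠ w} := (Fintype.equivFinOfCardEq hc).symm
  refine ⟨toD ⟨H.n - 1, by omega, fun u v => H.adj (e u) (e v)⟩, le_mk.2 ?_, le_mk.2 ?_, ?_⟩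
  · refine ⟨⟨fun u => e.symm ⟨f u, hw u⟩, fun a b hab => ?_⟩, fun u v => ?_⟩
    · have := e.symm.injective hab
      exact f.injective (congrArg Subtype.val this)
    · show H.adj (e (e.symm ⟨f u, hw u⟩)) (e (e.symm ⟨f v, hw v⟩)) = G.adj u v
      rw [e.apply_symm_apply, e.apply_symm_apply]
      exact hf u v
  · exact ⟨⟨fun u => (e u : Fin H.n), fun a b hab => e.injective (Subtype.ext hab)⟩,
      fun u v => rfl⟩
  · show H.n - 1 + 1 = H.n
    omega

theorem mem_lcov {y x : D} : y ∈ lcov x ↔ y ≤ x ∧ nVerts y + 1 = nVerts x := by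
  constructor
  · rintro ⟨h1, h2, h3⟩
    refine ⟨h1, ?_⟩
    have hlt : nVerts y < nVerts x := by
      by_contra hc
      exact h2 (eq_of_le h1 (not_lt.1 hc))
    obtain ⟨z, hz1, hz2, hz3⟩ := interp h1 hlt
    rcases h3 z hz1 hz2 with rfl | rfl
    · exact hz3
    · omega
  · rintro ⟨h1, h2⟩
    refine ⟨h1, fun h => by rw [h] at h2; omega, fun z hz1 hz2 => ?_⟩
    have a := nV_le hz1
    have b := nV_le hz2
    by_cases hc : nVerts z ≤ nVerts y
    · exact Or.inl (eq_of_le hz1 hc).symm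
    · exact Or.inr (eq_of_le hz2 (by omega))

theorem exists_le_one (x : D) : ∃ z, z ≤ x ∧ nVerts z = 1 := by
  induction x using ind with
  | h G =>
  refine ⟨toD ⟨1, one_pos, fun _ _ => G.adj ⟨0, G.pos⟩ ⟨0, G.pos⟩⟩, le_mk.2 ?_, rfl⟩
  exact ⟨⟨fun _ => ⟨0, G.pos⟩, fun a b _ => Subsingleton.elim (α := Fin 1) a b⟩, fun _ _ => rfl⟩

theorem nV_eq_of_lcov {x y : D} (hx : 2 ≤ nVerts x) (h : lcov y = lcov x) :
    nVerts y = nVerts x := by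
  obtain ⟨z, hz, h1⟩ := exists_le_one x
  obtain ⟨w, -, hw, hw'⟩ := interp hz (by omega)
  have h2 : w ∈ lcov x := mem_lcov.2 ⟨hw, hw'⟩
  rw [← h] at h2
  have := (mem_lcov.1 h2).2
  omega

/-- Level `m`. -/
abbrev Lev (m : ℕ) : Type := {x : D // nVerts x = m}

theorem finite_Lev (m : ℕ) (hm : 0 < m) : Finite (Lev m) := by
  refine Finite.of_surjective
    (fun a : Fin m → Fin m → Bool => (⟨toD ⟨m, hm, a⟩, rfl⟩ : Lev m)) ?_
  rintro ⟨x, hx⟩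
  induction x using ind with
  | h G =>
  obtain ⟨k, hk, a⟩ := G
  have : k = m := hx
  subst this
  exact ⟨a, rfl⟩

/-- lower covers on a level -/
def fL (m : ℕ) (x : Lev m) : Set D := lcov x.1

theorem scount_eq {m : ℕ} (hm : 2 ≤ m) (x : Lev m) :
    scount x.1 = Nat.card {y : Lev m // fL m y = fL m x} := by
  refine Nat.card_congr
    { toFun := fun y => ⟨⟨y.1, (nV_eq_of_lcov (by rw [x.2]; exact hm) y.2).trans x.2⟩, y.2⟩
      invFun := fun y => ⟨y.1.1, y.2⟩
      left_inv := fun _ => rfl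
      right_inv := fun _ => rfl }

theorem fL_sub {n : ℕ} (x : Lev (n + 1)) : fL (n + 1) x ⊆ Dn n := by
  intro y hy
  have := (mem_lcov.1 hy).2
  have h2 := x.2
  show nVerts y ≤ n
  omega

theorem setImage_sub {n : ℕ} {φ : ↥(Dn n) → ↥(Dn n)} (hφ : Function.Injective φ) {S T : Set D}
    (hS : S ⊆ Dn n) (h : setImage φ S = setImage φ T) : S ⊆ T := by
  intro y hy
  have : (φ ⟨y, hS hy⟩ : D) ∈ setImage φ S := ⟨y, hS hy, hy, rfl⟩
  rw [h] at this
  obtain ⟨z, hz, hzT, he⟩ := this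
  have := congrArg Subtype.val (hφ (Subtype.ext he))
  simp only at this
  rwa [this]

theorem setImage_inj {n : ℕ} {φ : ↥(Dn n) → ↥(Dn n)} (hφ : Function.Injective φ) {S T : Set D}
    (hS : S ⊆ Dn n) (hT : T ⊆ Dn n) (h : setImage φ S = setImage φ T) : S = T :=
  (setImage_sub hφ hS h).antisymm (setImage_sub hφ hT h.symm)

/-- twisted level permutations -/
abbrev Tw {n : ℕ} (φ : ↥(Dn n) → ↥(Dn n)) : Type :=
  {e : Equiv.Perm (Lev (n + 1)) // ∀ x, fL (n + 1) (e x) = setImage φ (fL (n + 1) x)}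

theorem exists_tw {n : ℕ} (hn : 1 ≤ n) {φ : ↥(Dn n) → ↥(Dn n)} (hφ : Function.Injective φ)
    (hH : HsetImage φ (Hset (n + 1)) = Hset (n + 1)) : Nonempty (Tw φ) := by
  have : Finite (Lev (n + 1)) := finite_Lev _ (by omega)
  have key : ∀ S, Nonempty ({x : Lev (n + 1) // setImage φ (fL (n + 1) x) = S} ≃
      {x : Lev (n + 1) // fL (n + 1) x = S}) := by
    intro S
    by_cases hS : ∃ x : Lev (n + 1), fL (n + 1) x = S
    · obtain ⟨x, rfl⟩ := hS
      have hx : (lcov x.1, scount x.1) ∈ Hset (n + 1) := ⟨x.1, x.2, rfl⟩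
      rw [← hH] at hx
      obtain ⟨q, ⟨x', hx', rfl⟩, hq⟩ := hx
      have hq1 : fL (n + 1) x = setImage φ (fL (n + 1) ⟨x', hx'⟩) := congrArg Prod.fst hq
      have hq2 : scount x.1 = scount x' := congrArg Prod.snd hq
      refine (Finite.card_eq).1 ?_
      rw [← scount_eq (by omega), hq2]
      have := scount_eq (by omega : 2 ≤ n + 1) ⟨x', hx'⟩
      simp only at this
      rw [this]
      refine Nat.card_congr (Equiv.subtypeEquivRight fun y => ?_)
      rw [hq1]
      exact ⟨fun h => setImage_inj hφ (fL_sub _) (fL_sub _) h, fun h => by rw [h]⟩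
    · have h1 : IsEmpty {x : Lev (n + 1) // fL (n + 1) x = S} := ⟨fun y => hS ⟨y.1, y.2⟩⟩
      have h2 : IsEmpty {x : Lev (n + 1) // setImage φ (fL (n + 1) x) = S} := by
        refine ⟨fun y => ?_⟩
        have : (setImage φ (lcov y.1.1), scount y.1.1) ∈ HsetImage φ (Hset (n + 1)) :=
          ⟨_, ⟨y.1.1, y.1.2, rfl⟩, rfl⟩
        rw [hH] at this
        obtain ⟨z, hz, he⟩ := this
        have he1 : setImage φ (lcov y.1.1) = lcov z := congrArg Prod.fst he
        exact hS ⟨⟨z, hz⟩, he1.symm.trans y.2⟩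
      exact ⟨Equiv.equivOfIsEmpty _ _⟩
  let e : Equiv.Perm (Lev (n + 1)) :=
    ((Equiv.sigmaFiberEquiv (fun x => setImage φ (fL (n + 1) x))).symm.trans
      (Equiv.sigmaCongrRight fun S => (key S).some)).trans (Equiv.sigmaFiberEquiv (fL (n + 1)))
  exact ⟨e, fun x => ((key (setImage φ (fL (n + 1) x))).some ⟨x, rfl⟩).2⟩

theorem card_tw {n : ℕ} {φ : ↥(Dn n) → ↥(Dn n)} (e0 : Tw φ) (hφ : Function.Injective φ) :
    Nat.card (Tw φ) = Nat.card {g : Equiv.Perm (Lev (n + 1)) // fL (n + 1) ∘ g = fL (n + 1)} := by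
  refine Nat.card_congr
    { toFun := fun e => ⟨e.1.trans e0.1.symm, ?_⟩
      invFun := fun g => ⟨g.1.trans e0.1, ?_⟩
      left_inv := fun e => ?_
      right_inv := fun g => ?_ }
  · funext x
    apply setImage_inj hφ (fL_sub _) (fL_sub _)
    rw [← e0.2, ← e.2]
    simp
  · intro x
    have := congrFun g.2 x
    simp only [Function.comp_apply] at this
    rw [Equiv.trans_apply, e0.2, this]
  · ext x; simp
  · ext x; simp

open Classical in
theorem card_stab {n : ℕ} (hn : 1 ≤ n) :
    Nat.card {g : Equiv.Perm (Lev (n + 1)) // fL (n + 1) ∘ g = fL (n + 1)} =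
      ∏ᶠ p ∈ Hset (n + 1), Nat.factorial (Prod.snd p) := by
  have : Finite (Lev (n + 1)) := finite_Lev _ (by omega)
  have : Fintype (Lev (n + 1)) := Fintype.ofFinite _
  rw [Nat.card_eq_fintype_card, DomMulAct.stabilizer_card']
  have hs : Hset (n + 1) = (fun S => (S, Nat.card {y : Lev (n + 1) // fL (n + 1) y = S})) ''
      (↑(Finset.univ.image (fL (n + 1))) : Set (Set D)) := by
    ext p
    constructor
    · rintro ⟨x, hx, rfl⟩
      refine ⟨lcov x, ?_, ?_⟩
      · simp only [Finset.coe_image, Finset.coe_univ, Set.image_univ]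
        exact ⟨⟨x, hx⟩, rfl⟩
      · have := scount_eq (by omega : 2 ≤ n + 1) ⟨x, hx⟩
        simp only at this
        rw [this]
        rfl
    · rintro ⟨S, hS, rfl⟩
      simp only [Finset.coe_image, Finset.coe_univ, Set.image_univ] at hS
      obtain ⟨x, rfl⟩ := hS
      refine ⟨x.1, x.2, ?_⟩
      rw [scount_eq (by omega : 2 ≤ n + 1) x]
      rfl
  rw [hs, finprod_mem_image (fun a _ b _ h => congrArg Prod.fst h), finprod_mem_coe_finset]
  refine Finset.prod_congr rfl fun S _ => ?_
  simp only [Nat.card_eq_fintype_card]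

theorem le_lev_iff {n : ℕ} (x : Lev (n + 1)) {y : D} (hy : y ∈ Dn n) :
    y ≤ x.1 ↔ ∃ z ∈ fL (n + 1) x, y ≤ z := by
  constructor
  · intro h
    have hy' : nVerts y ≤ n := hy
    have := x.2
    obtain ⟨z, h1, h2, h3⟩ := interp h (by omega)
    exact ⟨z, mem_lcov.2 ⟨h2, h3⟩, h1⟩
  · rintro ⟨z, hz, h⟩
    exact D_trans h (mem_lcov.1 hz).1

/-- the extensions -/
abbrev Ext {n : ℕ} (φ : ↥(Dn n) → ↥(Dn n)) : Type :=
  {ψ : ↥(Dn (n + 1)) → ↥(Dn (n + 1)) // IsOrderAuto ψ ∧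
        ∀ (x : D) (hx : x ∈ Dn n), (↑(ψ ⟨x, mem_Dn_succ hx⟩) : D) = ↑(φ ⟨x, hx⟩)}

theorem lev_of {n : ℕ} {x : D} (h : x ∈ Dn (n + 1)) (h' : x ∉ Dn n) : nVerts x = n + 1 := by
  have h1 : nVerts x ≤ n + 1 := h
  have h2 : ¬ nVerts x ≤ n := h'
  omega

theorem not_mem {n : ℕ} (x : Lev (n + 1)) : x.1 ∉ Dn n := by
  intro h
  have h1 : nVerts x.1 ≤ n := h
  have := x.2
  omega

theorem mem_succ {n : ℕ} (x : Lev (n + 1)) : x.1 ∈ Dn (n + 1) := le_of_eq x.2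

open Classical in
/-- glue -/
noncomputable def glue {n : ℕ} (φ : ↥(Dn n) → ↥(Dn n)) (e : Lev (n + 1) → Lev (n + 1))
    (x : ↥(Dn (n + 1))) : ↥(Dn (n + 1)) :=
  if h : x.1 ∈ Dn n then ⟨φ ⟨x.1, h⟩, mem_Dn_succ (φ ⟨x.1, h⟩).2⟩
  else ⟨e ⟨x.1, lev_of x.2 h⟩, mem_succ _⟩

theorem glue_lo {n : ℕ} (φ : ↥(Dn n) → ↥(Dn n)) (e : Lev (n + 1) → Lev (n + 1))
    (x : D) (h : x ∈ Dn n) (h' : x ∈ Dn (n + 1)) : (glue φ e ⟨x, h'⟩ : D) = φ ⟨x, h⟩ := by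
  simp [glue, h]

theorem glue_hi {n : ℕ} (φ : ↥(Dn n) → ↥(Dn n)) (e : Lev (n + 1) → Lev (n + 1))
    (x : Lev (n + 1)) (h' : x.1 ∈ Dn (n + 1)) : (glue φ e ⟨x.1, h'⟩ : D) = e x := by
  simp [glue, not_mem x]

theorem cases_succ {n : ℕ} {P : ↥(Dn (n + 1)) → Prop}
    (h1 : ∀ (x : D) (h : x ∈ Dn n), P ⟨x, mem_Dn_succ h⟩)
    (h2 : ∀ x : Lev (n + 1), P ⟨x.1, mem_succ x⟩) (x : ↥(Dn (n + 1))) : P x := by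
  obtain ⟨x, hx⟩ := x
  by_cases h : x ∈ Dn n
  · exact h1 x h
  · exact h2 ⟨x, lev_of hx h⟩

theorem glue_bij {n : ℕ} {φ : ↥(Dn n) → ↥(Dn n)} (hφ : Function.Bijective φ)
    (e : Equiv.Perm (Lev (n + 1))) : Function.Bijective (glue φ e) := by
  constructor
  · intro x y hxy
    have hxy' := congrArg Subtype.val hxy
    clear hxy
    induction x using cases_succ with
    | h1 x hx =>
      induction y using cases_succ with
      | h1 y hy =>
        rw [glue_lo _ _ x hx, glue_lo _ _ y hy] at hxy'
        have := hφ.1 (Subtype.ext hxy')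
        simpa using this
      | h2 y =>
        rw [glue_lo _ _ x hx, glue_hi] at hxy'
        exact absurd (hxy' ▸ (φ ⟨x, hx⟩).2) (not_mem (e y))
    | h2 x =>
      induction y using cases_succ with
      | h1 y hy =>
        rw [glue_lo _ _ y hy, glue_hi] at hxy'
        exact absurd (hxy' ▸ (φ ⟨y, hy⟩).2) (not_mem (e x))
      | h2 y =>
        rw [glue_hi, glue_hi] at hxy'
        have := e.injective (Subtype.ext hxy')
        rw [this]
  · intro y
    induction y using cases_succ with
    | h1 y hy =>
      obtain ⟨x, hx⟩ := hφ.2 ⟨y, hy⟩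
      refine ⟨⟨x.1, mem_Dn_succ x.2⟩, Subtype.ext ?_⟩
      rw [glue_lo _ _ x.1 x.2]
      simp [hx]
    | h2 y =>
      refine ⟨⟨(e.symm y).1, mem_succ _⟩, Subtype.ext ?_⟩
      rw [glue_hi]
      simp

theorem glue_le {n : ℕ} {φ : ↥(Dn n) → ↥(Dn n)} (hφ : IsOrderAuto φ)
    (e : Tw φ) (x y : ↥(Dn (n + 1))) : x.1 ≤ y.1 ↔ (glue φ e.1 x).1 ≤ (glue φ e.1 y).1 := by
  have bad : ∀ (x : Lev (n + 1)) (y : D), y ∈ Dn n → ¬ x.1 ≤ y := by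
    intro x y hy h
    have h1 := nV_le h
    have h2 := x.2
    have h3 : nVerts y ≤ n := hy
    omega
  induction x using cases_succ with
  | h1 x hx =>
    induction y using cases_succ with
    | h1 y hy =>
      rw [glue_lo _ _ x hx, glue_lo _ _ y hy]
      exact hφ.2 ⟨x, hx⟩ ⟨y, hy⟩
    | h2 y =>
      rw [glue_lo _ _ x hx, glue_hi, le_lev_iff y hx, le_lev_iff (e.1 y) (φ ⟨x, hx⟩).2, e.2]
      constructor
      · rintro ⟨z, hz, h⟩
        exact ⟨_, ⟨z, fL_sub _ hz, hz, rfl⟩, (hφ.2 ⟨x, hx⟩ ⟨z, fL_sub _ hz⟩).1 h⟩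
      · rintro ⟨_, ⟨z, hz, hz', rfl⟩, h⟩
        exact ⟨z, hz', (hφ.2 ⟨x, hx⟩ ⟨z, hz⟩).2 h⟩
  | h2 x =>
    induction y using cases_succ with
    | h1 y hy =>
      rw [glue_lo _ _ y hy, glue_hi]
      exact iff_of_false (bad _ _ hy) (bad _ _ (φ ⟨y, hy⟩).2)
    | h2 y =>
      rw [glue_hi, glue_hi]
      constructor
      · intro h
        have : x = y := Subtype.ext (eq_of_le h (by rw [x.2, y.2]))
        rw [this]
        exact D_refl _
      · intro h
        have : e.1 x = e.1 y := Subtype.ext (eq_of_le h (by rw [(e.1 x).2, (e.1 y).2]))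
        rw [e.1.injective this]
        exact D_refl _

/-- twisted permutation to extension -/
noncomputable def toExt {n : ℕ} {φ : ↥(Dn n) → ↥(Dn n)} (hφ : IsOrderAuto φ) (e : Tw φ) : Ext φ :=
  ⟨glue φ e.1, ⟨glue_bij hφ.1 e.1, glue_le hφ e⟩, fun x hx => glue_lo _ _ x hx _⟩

theorem toExt_bij {n : ℕ} {φ : ↥(Dn n) → ↥(Dn n)} (hφ : IsOrderAuto φ) :
    Function.Bijective (toExt hφ) := by
  constructor
  · intro e e' h
    ext x
    have h1 : glue φ e.1 = glue φ e'.1 := congrArg Subtype.val h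
    have h2 := congrArg Subtype.val (congrFun h1 ⟨x.1, mem_succ x⟩)
    rwa [glue_hi, glue_hi] at h2
  · rintro ⟨ψ, hψ, hr⟩
    have hfin : Finite (Lev (n + 1)) := finite_Lev _ (by omega)
    have hL : ∀ x : Lev (n + 1), nVerts (ψ ⟨x.1, mem_succ x⟩).1 = n + 1 := by
      intro x
      refine lev_of (ψ _).2 fun h => ?_
      obtain ⟨y, hy⟩ := hφ.1.2 ⟨_, h⟩
      have h1 := hr y.1 y.2
      simp only [Subtype.coe_eta, hy] at h1
      have h2 := congrArg Subtype.val (hψ.1.1 (Subtype.ext h1))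
      simp only at h2
      exact not_mem x (h2 ▸ y.2)
    let e0 : Lev (n + 1) → Lev (n + 1) := fun x => ⟨_, hL x⟩
    have he0 : Function.Injective e0 := by
      intro x y h
      have h1 := congrArg Subtype.val h
      have h2 := congrArg Subtype.val (hψ.1.1 (Subtype.ext h1))
      exact Subtype.ext h2
    let e : Equiv.Perm (Lev (n + 1)) := Equiv.ofBijective e0 (Finite.injective_iff_bijective.1 he0)
    have hle : ∀ (x : Lev (n + 1)) (y : D) (hy : y ∈ Dn n),
        y ≤ x.1 ↔ (φ ⟨y, hy⟩ : D) ≤ (e x).1 := by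
      intro x y hy
      rw [← hr y hy]
      exact hψ.2 ⟨y, mem_Dn_succ hy⟩ ⟨x.1, mem_succ x⟩
    have hlo : ∀ (x : Lev (n + 1)) (z : D), z ≤ x.1 → z ∈ Dn n ∨ z = x.1 := by
      intro x z h
      by_cases hz : z ∈ Dn n
      · exact Or.inl hz
      · refine Or.inr (eq_of_le h ?_)
        have h2 : ¬ nVerts z ≤ n := hz
        have := x.2
        omega
    refine ⟨⟨e, fun x => ?_⟩, ?_⟩
    · ext z
      constructor
      · intro hz
        have hzD := fL_sub _ hz
        obtain ⟨y, hy⟩ := hφ.1.2 ⟨z, hzD⟩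
        have hyz : (φ ⟨y.1, y.2⟩ : D) = z := by simp [hy]
        refine ⟨y.1, y.2, ?_, hyz.symm⟩
        obtain ⟨h1, h2, h3⟩ := hz
        refine ⟨(hle x y.1 y.2).2 (by rw [hyz]; exact h1), fun h => not_mem x (h ▸ y.2), ?_⟩
        intro w hw1 hw2
        rcases hlo x w hw2 with hw | hw
        · left
          have a := (hφ.2 y ⟨w, hw⟩).1 hw1
          have a' : z ≤ (φ ⟨w, hw⟩ : D) := by rw [← hyz]; exact a
          rcases h3 _ a' ((hle x w hw).1 hw2) with b | b
          · have := hφ.1.1 (Subtype.ext (b.trans hyz.symm))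
            exact congrArg Subtype.val this
          · exact absurd (b ▸ (φ ⟨w, hw⟩).2) (not_mem (e x))
        · exact Or.inr hw
      · rintro ⟨y, hy, ⟨h1, h2, h3⟩, rfl⟩
        refine ⟨(hle x y hy).1 h1, fun h => not_mem (e x) (h ▸ (φ ⟨y, hy⟩).2), ?_⟩
        intro w hw1 hw2
        rcases hlo (e x) w hw2 with hw | hw
        · left
          obtain ⟨v, hv⟩ := hφ.1.2 ⟨w, hw⟩
          have hvw : (φ ⟨v.1, v.2⟩ : D) = w := by simp [hv]
          have a : y ≤ v.1 := (hφ.2 ⟨y, hy⟩ v).2 (by rw [hv]; exact hw1)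
          rcases h3 v.1 a ((hle x v.1 v.2).2 (by rw [hvw]; exact hw2)) with b | b
          · rw [← hvw]
            simp only [b]
          · exact absurd (b ▸ v.2) (not_mem x)
        · exact Or.inr hw
    · apply Subtype.ext
      funext x
      apply Subtype.ext
      show (glue φ e x).1 = (ψ x).1
      induction x using cases_succ with
      | h1 x hx => rw [glue_lo _ _ x hx, hr x hx]
      | h2 x => rw [glue_hi]; rfl

end ExtLem

/-- Extension Lemma, counting extensions: an order automorphism `φ` of
`D_n` with `φ(H_{n+1}) = H_{n+1}` has exactly `∏_{(S,k) ∈ H_{n+1}} k!` extensions to an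
order automorphism of `D_{n+1}`. -/
theorem extension_lemma_count (n : ℕ) (hn : 1 ≤ n)
    (φ : ↥(Dn n) → ↥(Dn n)) (hφ : IsOrderAuto φ)
    (hH : HsetImage φ (Hset (n + 1)) = Hset (n + 1)) :
    Nat.card {ψ : ↥(Dn (n + 1)) → ↥(Dn (n + 1)) // IsOrderAuto ψ ∧
        ∀ (x : D) (hx : x ∈ Dn n), (↑(ψ ⟨x, mem_Dn_succ hx⟩) : D) = ↑(φ ⟨x, hx⟩)}
      = ∏ᶠ p ∈ Hset (n + 1), Nat.factorial (Prod.snd p) := by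
  obtain ⟨e0⟩ := ExtLem.exists_tw hn hφ.1.1 hH
  rw [← ExtLem.card_stab hn, ← ExtLem.card_tw e0 hφ.1.1]
  exact (Nat.card_congr (Equiv.ofBijective _ (ExtLem.toExt_bij hφ))).symm
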